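/- arXiv:2311.05874 — 3 statements merged into one kernel-verified Lean document; each statement's English description precedes it below -/
import Mathlib

section
/- Let 𝒳 be a nonempty finite type, let μ : 𝒳 → ℝ be a strictly positive probability mass function (μ x > 0 for all x and ∑_x μ x = 1), and let p : 𝒳 × 𝒳 → ℝ be a probability mass function on 𝒳 × 𝒳 that is symmetric (p(x,y) = p(y,x)) and has both marginals equal to μ (∑_y p(x,y) = μ x for all x). Define the matrix B : Matrix 𝒳 𝒳 ℝ by B x y = p(x,y)/(μ x · μ y) and let D = Matrix.diagonal μ. Then for every integer k ≥ 1, if X₁,…,X_k, Y₁,…,Y_k are 2k independent 𝒳-valued random variables each with law μ, the expectation of the cyclic product ∏_{i=1}^{k} B(X_i, Y_i) · B(X_i, Y_{(i mod k)+1}) equals Matrix.trace ((D * B)^(2k)). -/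
/-!
Let `C = (D * B) ^ 2`. For a fixed tuple `Y`, the sum over `X` factorises over the coordinates, and
since `B` is symmetric the factor at `i` is
`∑ x, μ (Y i) * B (Y i) x * μ x * B x (Y (i + 1)) = C (Y i) (Y (i + 1))`. What remains is the sum over
closed walks `Y` of length `k` of the weights `∏ i, C (Y i) (Y (i + 1))`, which is `trace (C ^ k)`
(`sum_closed_walk_eq_trace`), by the expansion of matrix powers over walks (`sum_walk_eq_pow_mulVec`).
-/

open scoped BigOperators

/-- Expansion of a matrix power over walks: the walks of `n` steps starting at `a`, weighted by `C`
along their edges and by `g` at their endpoint, sum to `(C ^ n *ᵥ g) a`. -/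
theorem sum_walk_eq_pow_mulVec {α : Type*} [Fintype α] [DecidableEq α]
    (C : Matrix α α ℝ) (g : α → ℝ) (n : ℕ) (a : α) :
    ∑ Z : Fin n → α,
      (∏ i : Fin n, C (Fin.cons (α := fun _ => α) a Z i.castSucc) (Z i)) *
        g (Fin.cons (α := fun _ => α) a Z (Fin.last n)) = (C ^ n).mulVec g a := by
  induction n generalizing a with
  | zero => simp
  | succ n ih =>
    rw [← (Fin.consEquiv (fun _ : Fin (n + 1) => α)).sum_comp, Fintype.sum_prod_type, pow_succ',
      ← Matrix.mulVec_mulVec, Matrix.mulVec, dotProduct]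
    refine Finset.sum_congr rfl fun b _ => ?_
    rw [← ih b, Finset.mul_sum]
    refine Finset.sum_congr rfl fun Z _ => ?_
    simp [Fin.consEquiv, Fin.prod_univ_succ, ← Fin.succ_last, mul_assoc]

theorem sum_closed_walk_eq_trace {α : Type*} [Fintype α] [DecidableEq α]
    (C : Matrix α α ℝ) (k : ℕ) [NeZero k] :
    ∑ Y : Fin k → α, ∏ i, C (Y i) (Y (i + 1)) = Matrix.trace (C ^ k) := by
  obtain ⟨n, rfl⟩ := Nat.exists_eq_add_one_of_ne_zero (NeZero.ne k)
  rw [← (Fin.consEquiv (fun _ : Fin (n + 1) => α)).sum_comp, Fintype.sum_prod_type, Matrix.trace]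
  refine Finset.sum_congr rfl fun a _ => ?_
  have h := sum_walk_eq_pow_mulVec C (fun b => C b a) n a
  have h' : (C ^ n).mulVec (fun b => C b a) a = (C ^ (n + 1)) a a := by
    rw [pow_succ, Matrix.mul_apply]; rfl
  rw [Matrix.diag_apply, ← h', ← h]
  refine Finset.sum_congr rfl fun Z _ => ?_
  rw [Fin.prod_univ_castSucc]
  simp [Fin.consEquiv]

/-- **Orbit-expectation lemma (discrete form).**
For a symmetric pmf `p` on `𝒳 × 𝒳` with both marginals equal to the strictly positive
pmf `μ`, let `B x y = p (x, y) / (μ x * μ y)` and `D = Matrix.diagonal μ`. Then for every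
`k ≥ 1`, if `X₁, …, X_k, Y₁, …, Y_k` are `2k` independent `𝒳`-valued random variables with
law `μ` (expectation = sum over all tuples weighted by the product pmf), the expectation of
the cyclic product `∏ᵢ B (Xᵢ, Yᵢ) * B (Xᵢ, Y_{i+1 (cyclically)})` equals
`trace ((D * B) ^ (2k))`. -/
theorem orbit_expectation_eq_trace
    {𝒳 : Type*} [Fintype 𝒳] [Nonempty 𝒳] [DecidableEq 𝒳]
    (μ : 𝒳 → ℝ) (hμpos : ∀ x, 0 < μ x) (hμsum : ∑ x, μ x = 1)
    (p : 𝒳 × 𝒳 → ℝ) (hp_nonneg : ∀ z, 0 ≤ p z) (hp_sum : ∑ z, p z = 1)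
    (hp_symm : ∀ x y, p (x, y) = p (y, x))
    (hp_marg : ∀ x, ∑ y, p (x, y) = μ x)
    (B : Matrix 𝒳 𝒳 ℝ) (hB : ∀ x y, B x y = p (x, y) / (μ x * μ y))
    (D : Matrix 𝒳 𝒳 ℝ) (hD : D = Matrix.diagonal μ)
    (k : ℕ) (hk : 1 ≤ k) [NeZero k] :
    ∑ X : Fin k → 𝒳, ∑ Y : Fin k → 𝒳,
      ((∏ i, μ (X i)) * (∏ i, μ (Y i))) *
        (∏ i, B (X i) (Y i) * B (X i) (Y (i + 1))) =
      Matrix.trace ((D * B) ^ (2 * k)) := by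
  have hBsymm : ∀ x y, B x y = B y x := fun x y => by
    rw [hB, hB, hp_symm, mul_comm (μ x)]
  have hC : ∀ y z, ((D * B) ^ 2) y z = ∑ x, μ y * μ x * (B x y * B x z) := fun y z => by
    rw [pow_two, Matrix.mul_apply]
    refine Finset.sum_congr rfl fun x _ => ?_
    rw [hD, Matrix.diagonal_mul, Matrix.diagonal_mul, hBsymm y x]
    ring
  rw [pow_mul, ← sum_closed_walk_eq_trace, Finset.sum_comm]
  refine Finset.sum_congr rfl fun Y _ => ?_
  simp_rw [hC]
  rw [Fintype.prod_sum]
  refine Finset.sum_congr rfl fun X _ => ?_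
  simp_rw [Finset.prod_mul_distrib]
  ring
end

section
/- Let 𝒳 be a nonempty finite type, μ : 𝒳 → ℝ a strictly positive probability mass function, and p : 𝒳 × 𝒳 → ℝ a symmetric probability mass function with both marginals equal to μ. Fix integers n, d ≥ 1. On Ω = ((Fin n → Fin d → 𝒳) × (Fin n → Fin d → 𝒳)), define the null pmf q₀(x,y) = ∏_{i,ℓ} μ(x i ℓ) · ∏_{i,ℓ} μ(y i ℓ), and for each permutation σ of Fin n the alternative pmf p_σ(x,y) = ∏_{i,ℓ} p(x i ℓ, y (σ i) ℓ). Define the likelihood ratio L(x,y) = (1/n!) · ∑_{σ} p_σ(x,y)/q₀(x,y). Let B x y = p(x,y)/(μ x · μ y), D = Matrix.diagonal μ, and for σ a permutation of Fin n and k ∈ [n] let N_k(σ) denote the number of orbits of σ on Fin n of cardinality k (fixed points count as orbits of size 1). Then the second moment of the likelihood ratio under the null satisfies ∑_{(x,y)} q₀(x,y) · L(x,y)² = (1/n!) · ∑_{σ} ∏_{k=1}^{n} ( Matrix.trace((D * B)^(2k)) )^(d · N_k(σ)). -/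
/-!
Expanding `L ^ 2` gives `(n!)⁻² ∑_σ ∑_τ` of the null expectation of `(p_σ / q₀) (p_τ / q₀)`, and
`p_σ / q₀ = ∏_{i,ℓ} B (x i ℓ) (y (σ i) ℓ)`. The columns `ℓ` decouple (`sum_prod_eq_pow`), so this
expectation is the `d`-th power of a one-column sum. Summing out `x` there and using the symmetry of
`B` leaves `∑_y ∏_i M (y i) (y (π i))` with `M = (D * B) ^ 2` and `π = σ⁻¹ * τ`
(`sum_pair_eq_sum_perm`).

That sum factors over the cycles of `π` (`sum_perm_eq_prod_trace`): in the coordinates of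
`exists_cycle_coordinates` a cycle of length `k` is `ZMod k` with the shift, and its factor is the
sum over closed walks of length `k`, namely `trace (M ^ k)` (`sum_cycle_eq_trace`). Finally, for
fixed `σ` the map `τ ↦ σ⁻¹ * τ` is a bijection of the permutations, so the double sum is `n!` times
a single one.
-/

open scoped BigOperators

/-- The number of orbits of cardinality `k` of a permutation `σ` of `Fin n`
(fixed points counting as orbits of size `1`): the number of points whose orbit has
size `k` (i.e. whose minimal period under `σ` is `k`), divided by `k`. -/
noncomputable def orbitCount {n : ℕ} (σ : Equiv.Perm (Fin n)) (k : ℕ) : ℕ :=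
  (Finset.univ.filter fun i : Fin n => Function.minimalPeriod σ i = k).card / k

/-- Walk expansion of a matrix power: the intermediate vertices are `y`, so the `k`-th step of the
walk `a, y 0, …, y (m - 1), b` goes from entry `k` of `Fin.cons a y` to entry `k` of
`Fin.snoc y b`. -/
theorem pow_succ_apply_eq_sum_paths {X : Type*} [Fintype X] [DecidableEq X]
    (M : Matrix X X ℝ) (m : ℕ) (a b : X) :
    (M ^ (m + 1)) a b = ∑ y : Fin m → X, ∏ k : Fin (m + 1),
      M ((Fin.cons a y : Fin (m + 1) → X) k) ((Fin.snoc y b : Fin (m + 1) → X) k) := by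
  induction m generalizing a with
  | zero => simp [Fin.snoc]
  | succ m ih =>
    rw [pow_succ', Matrix.mul_apply, ← (Fin.consEquiv (fun _ : Fin (m + 1) => X)).sum_comp,
      Fintype.sum_prod_type]
    refine Finset.sum_congr rfl fun c _ => ?_
    rw [ih, Finset.mul_sum]
    refine Finset.sum_congr rfl fun y _ => ?_
    change _ = ∏ k, M ((Fin.cons a (Fin.cons c y : Fin (m + 1) → X) : Fin (m + 2) → X) k)
      ((Fin.snoc (Fin.cons c y : Fin (m + 1) → X) b : Fin (m + 2) → X) k)
    rw [← Fin.cons_snoc_eq_snoc_cons]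
    conv_rhs => rw [Fin.prod_univ_succ]
    simp only [Fin.cons_zero, Fin.cons_succ]

/-- Closed walks of length `m`, indexed by `ZMod m`, sum to the trace of the `m`-th power. -/
theorem sum_cycle_eq_trace {X : Type*} [Fintype X] [DecidableEq X]
    (M : Matrix X X ℝ) (m : ℕ) [NeZero m] :
    ∑ y : ZMod m → X, ∏ k : ZMod m, M (y k) (y (k + 1)) = (M ^ m).trace := by
  -- For `m + 1` the type `ZMod (m + 1)` is `Fin (m + 1)` by definition.
  obtain _ | m := m
  · exact absurd rfl (NeZero.ne 0)
  change ∑ y : Fin (m + 1) → X, ∏ k : Fin (m + 1), M (y k) (y (k + 1)) = _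
  rw [← (Fin.consEquiv (fun _ : Fin (m + 1) => X)).sum_comp, Fintype.sum_prod_type, Matrix.trace]
  refine Finset.sum_congr rfl fun a _ => ?_
  rw [Matrix.diag_apply, pow_succ_apply_eq_sum_paths]
  refine Finset.sum_congr rfl fun y _ => Finset.prod_congr rfl fun k _ => ?_
  simp only [Fin.consEquiv_apply]
  congr 1
  cases k using Fin.lastCases with
  | last => simp
  | cast j => simp

/-- Cycle decomposition in coordinates: each orbit `ω` of `π` is identified with `ZMod (m ω)` in
such a way that `π` acts as `k ↦ k + 1`. -/
theorem exists_cycle_coordinates {n : ℕ} (π : Equiv.Perm (Fin n)) :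
    ∃ (Ω : Type) (_ : Fintype Ω) (m : Ω → ℕ) (e : (Σ ω, ZMod (m ω)) ≃ Fin n),
      (∀ ω, m ω ∈ Finset.Icc 1 n) ∧
      (∀ ω k, π (e ⟨ω, k⟩) = e ⟨ω, k + 1⟩) ∧
      (∀ ω k, Function.minimalPeriod π (e ⟨ω, k⟩) = m ω) := by
  classical
  let G := Subgroup.zpowers π
  let Ω := MulAction.orbitRel.Quotient G (Fin n)
  let m : Ω → ℕ := fun ω => Function.minimalPeriod (π • · : Fin n → Fin n) ω.out
  let e : (Σ ω : Ω, ZMod (m ω)) ≃ Fin n :=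
    ((MulAction.selfEquivSigmaOrbits G (Fin n)).trans
      (Equiv.sigmaCongrRight fun ω => MulAction.orbitZPowersEquiv π ω.out)).symm
  have he : ∀ ω (k : ℤ), e ⟨ω, (k : ZMod (m ω))⟩ = (π ^ k) ω.out := fun ω k =>
    congrArg Subtype.val (MulAction.orbitZPowersEquiv_symm_apply' π (Quotient.out ω) k)
  have hper : ∀ i, i ∈ Function.periodicPts π := fun i =>
    Function.mk_mem_periodicPts (orderOf_pos π) (by
      rw [Function.IsPeriodicPt, Function.IsFixedPt, ← Equiv.Perm.coe_pow, pow_orderOf_eq_one]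
      rfl)
  have hstep : ∀ ω k, π (e ⟨ω, k⟩) = e ⟨ω, k + 1⟩ := by
    intro ω k
    obtain ⟨k, rfl⟩ := ZMod.intCast_surjective k
    rw [← Int.cast_one, ← Int.cast_add, he, he, add_comm, zpow_add, zpow_one]
    rfl
  refine ⟨Ω, inferInstance, m, e, fun ω => Finset.mem_Icc.2 ⟨?_, ?_⟩, hstep, ?_⟩
  · exact Function.minimalPeriod_pos_of_mem_periodicPts (hper _)
  · exact (Function.minimalPeriod_le_card (f := π) (x := ω.out)).trans_eq (Fintype.card_fin n)
  · intro ω k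
    have hm : NeZero (m ω) :=
      ⟨(Function.minimalPeriod_pos_of_mem_periodicPts (hper ω.out)).ne'⟩
    obtain ⟨k, rfl⟩ := ZMod.natCast_zmod_surjective k
    induction k with
    | zero =>
      have := he ω 0
      simp only [Int.cast_zero, zpow_zero, Equiv.Perm.one_apply] at this
      rw [Nat.cast_zero, this]
      rfl
    | succ k ih => rw [Nat.cast_succ, ← hstep, Function.minimalPeriod_apply (hper _), ih]

/-- The sum `∑_y ∏_i M (y i) (y (π i))` factors over the orbits of `π`, an orbit of size `k`
contributing `trace (M ^ k)`. -/
theorem sum_perm_eq_prod_trace {X : Type*} [Fintype X] [DecidableEq X]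
    (M : Matrix X X ℝ) {n : ℕ} (π : Equiv.Perm (Fin n)) :
    ∑ y : Fin n → X, ∏ i, M (y i) (y (π i)) =
      ∏ k ∈ Finset.Icc 1 n, (M ^ k).trace ^ orbitCount π k := by
  classical
  obtain ⟨Ω, _, m, e, hm, hstep, hmin⟩ := exists_cycle_coordinates π
  have hne : ∀ ω, NeZero (m ω) := fun ω => ⟨by have := Finset.mem_Icc.1 (hm ω); omega⟩
  have hcount : ∀ k ∈ Finset.Icc 1 n,
      orbitCount π k = (Finset.univ.filter fun ω => m ω = k).card := by
    intro k hk
    have hk0 : 0 < k := (Finset.mem_Icc.1 hk).1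
    rw [orbitCount]
    -- The division in `orbitCount` is exact: each orbit of size `k` accounts for `k` points.
    refine Nat.div_eq_of_eq_mul_left hk0 ?_
    rw [Finset.card_filter, ← e.sum_comp, Fintype.sum_sigma, Finset.card_filter, Finset.sum_mul]
    refine Finset.sum_congr rfl fun ω _ => ?_
    simp only [hmin, Finset.sum_const, Finset.card_univ, ZMod.card]
    split_ifs with h <;> simp [h]
  calc ∑ y : Fin n → X, ∏ i, M (y i) (y (π i))
      = ∑ z : (∀ ω, ZMod (m ω) → X), ∏ ω, ∏ k, M (z ω k) (z ω (k + 1)) := by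
        refine Fintype.sum_equiv
          ((Equiv.arrowCongr e.symm (Equiv.refl X)).trans (Equiv.piCurry fun ω _ => X)) _ _ ?_
        intro y
        rw [← e.prod_comp, Fintype.prod_sigma]
        simp only [hstep]
        rfl
    _ = ∏ ω, (M ^ m ω).trace := by
        simp only [← sum_cycle_eq_trace]
        rw [Finset.prod_univ_sum, Fintype.piFinset_univ]
    _ = _ := by
        rw [← Finset.prod_fiberwise_of_maps_to (fun ω _ => hm ω)]
        refine Finset.prod_congr rfl fun k hk => ?_
        rw [hcount k hk, ← Finset.prod_const]
        exact Finset.prod_congr rfl fun ω hω => by rw [(Finset.mem_filter.1 hω).2]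

/-- Decoupling of the columns `ℓ : Fin d`: a weight that is a product over the columns of one and the
same `F` sums to a `d`-th power. -/
theorem sum_prod_eq_pow {X : Type*} [Fintype X] {n d : ℕ}
    (F : (Fin n → X) → (Fin n → X) → ℝ) :
    ∑ x : Fin n → Fin d → X, ∑ y : Fin n → Fin d → X,
      ∏ ℓ, F (fun i => x i ℓ) (fun i => y i ℓ) = (∑ x, ∑ y, F x y) ^ d := by
  classical
  rw [← Fintype.sum_prod_type', ← Fintype.sum_prod_type', Fintype.sum_pow]
  refine Fintype.sum_equiv
    (((Equiv.piComm _).prodCongr (Equiv.piComm _)).trans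
      (Equiv.arrowProdEquivProdArrow (Fin d) (fun _ => Fin n → X) (fun _ => Fin n → X)).symm) _ _ ?_
  intro z
  rfl

/-- Summing out `x` and relabelling `y` by `σ` turns the pair `(σ, τ)` into the single permutation
`σ⁻¹ * τ` with transition matrix `(D * B) ^ 2`, where `D = diagonal μ`. -/
theorem sum_pair_eq_sum_perm {X : Type*} [Fintype X] [DecidableEq X]
    (μ : X → ℝ) (B : Matrix X X ℝ) (hB : ∀ x y, B x y = B y x)
    {n : ℕ} (σ τ : Equiv.Perm (Fin n)) :
    ∑ x : Fin n → X, ∑ y : Fin n → X,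
      ∏ i, (μ (x i) * μ (y (σ i)) * B (x i) (y (σ i)) * B (x i) (y (τ i))) =
    ∑ y : Fin n → X, ∏ i,
      ((Matrix.diagonal μ * B) ^ 2) (y i) (y ((σ⁻¹ * τ) i)) := by
  classical
  rw [Finset.sum_comm]
  refine Fintype.sum_equiv (Equiv.arrowCongr σ⁻¹ (Equiv.refl X)) _ _ fun y => ?_
  have h : ∀ a b, ((Matrix.diagonal μ * B) ^ 2) a b =
      ∑ x, μ x * μ a * B x a * B x b := by
    intro a b
    rw [pow_two, Matrix.mul_apply]
    refine Finset.sum_congr rfl fun x _ => ?_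
    rw [Matrix.diagonal_mul, Matrix.diagonal_mul, hB x a]
    ring
  simp only [h]
  rw [Finset.prod_univ_sum, Fintype.piFinset_univ]
  have hσ : ∀ i, (Equiv.arrowCongr σ⁻¹ (Equiv.refl X)) y i = y (σ i) := fun _ => rfl
  have hτ : ∀ i, σ (σ⁻¹ (τ i)) = τ i := fun i => σ.apply_symm_apply _
  simp only [hσ, Equiv.Perm.mul_apply, hτ]

/-- **Second-moment formula for the unlabeled-database detection problem (finite alphabet).**
With null pmf `q₀(x,y) = ∏ μ(x i ℓ) ∏ μ(y i ℓ)`, alternative pmfs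
`p_σ(x,y) = ∏ p(x i ℓ, y (σ i) ℓ)` and likelihood ratio
`L = (1/n!) ∑_σ p_σ / q₀`, the second moment of `L` under the null equals
`(1/n!) ∑_σ ∏_{k=1}^n (trace ((D·B)^{2k}))^{d · N_k(σ)}`, where
`B x y = p (x,y) / (μ x · μ y)`, `D = diagonal μ` and `N_k(σ)` is the number of
orbits of `σ` of cardinality `k`. -/
theorem second_moment_likelihood_ratio
    {𝒳 : Type*} [Fintype 𝒳] [Nonempty 𝒳] [DecidableEq 𝒳]
    (μ : 𝒳 → ℝ) (hμpos : ∀ x, 0 < μ x) (hμsum : ∑ x, μ x = 1)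
    (p : 𝒳 × 𝒳 → ℝ) (hp_nonneg : ∀ z, 0 ≤ p z) (hp_sum : ∑ z, p z = 1)
    (hp_symm : ∀ x y, p (x, y) = p (y, x))
    (hp_marg : ∀ x, ∑ y, p (x, y) = μ x)
    (n d : ℕ) (hn : 1 ≤ n) (hd : 1 ≤ d)
    (q₀ : (Fin n → Fin d → 𝒳) → (Fin n → Fin d → 𝒳) → ℝ)
    (hq₀ : ∀ x y, q₀ x y =
      (∏ i, ∏ ℓ, μ (x i ℓ)) * (∏ i, ∏ ℓ, μ (y i ℓ)))
    (pAlt : Equiv.Perm (Fin n) → (Fin n → Fin d → 𝒳) → (Fin n → Fin d → 𝒳) → ℝ)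
    (hpAlt : ∀ σ x y, pAlt σ x y = ∏ i, ∏ ℓ, p (x i ℓ, y (σ i) ℓ))
    (L : (Fin n → Fin d → 𝒳) → (Fin n → Fin d → 𝒳) → ℝ)
    (hL : ∀ x y, L x y =
      (1 / (n.factorial : ℝ)) * ∑ σ : Equiv.Perm (Fin n), pAlt σ x y / q₀ x y)
    (B : Matrix 𝒳 𝒳 ℝ) (hB : ∀ x y, B x y = p (x, y) / (μ x * μ y))
    (D : Matrix 𝒳 𝒳 ℝ) (hD : D = Matrix.diagonal μ) :
    ∑ x : Fin n → Fin d → 𝒳, ∑ y : Fin n → Fin d → 𝒳, q₀ x y * (L x y) ^ 2 =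
      (1 / (n.factorial : ℝ)) * ∑ σ : Equiv.Perm (Fin n),
        ∏ k ∈ Finset.Icc 1 n,
          (Matrix.trace ((D * B) ^ (2 * k))) ^ (d * orbitCount σ k) := by
  subst hD
  have hBsymm : ∀ x y, B x y = B y x := fun x y => by
    rw [hB, hB, hp_symm, mul_comm (μ x)]
  have hq : ∀ (σ : Equiv.Perm (Fin n)) x y,
      q₀ x y = ∏ i, ∏ ℓ, (μ (x i ℓ) * μ (y (σ i) ℓ)) := by
    intro σ x y
    simp only [hq₀, Finset.prod_mul_distrib]
    rw [Equiv.prod_comp σ fun i => ∏ ℓ, μ (y i ℓ)]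
  -- `hq σ` matches the factors of `q₀` with the pairs `(x i, y (σ i))` of `p_σ`.
  have hratio : ∀ σ x y, pAlt σ x y / q₀ x y = ∏ i, ∏ ℓ, B (x i ℓ) (y (σ i) ℓ) := by
    intro σ x y
    simp only [hq σ, hpAlt, hB, Finset.prod_div_distrib]
  have hpair : ∀ σ τ : Equiv.Perm (Fin n),
      ∑ x, ∑ y, q₀ x y * ((pAlt σ x y / q₀ x y) * (pAlt τ x y / q₀ x y)) =
        ∏ k ∈ Finset.Icc 1 n, (Matrix.trace ((Matrix.diagonal μ * B) ^ (2 * k))) ^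
          (d * orbitCount (σ⁻¹ * τ) k) := by
    intro σ τ
    calc _ = ∑ x : Fin n → Fin d → 𝒳, ∑ y : Fin n → Fin d → 𝒳, ∏ ℓ, ∏ i,
          (μ (x i ℓ) * μ (y (σ i) ℓ) * B (x i ℓ) (y (σ i) ℓ) * B (x i ℓ) (y (τ i) ℓ)) := by
          refine Finset.sum_congr rfl fun x _ => Finset.sum_congr rfl fun y _ => ?_
          rw [hratio, hratio, hq σ, Finset.prod_comm (s := (Finset.univ : Finset (Fin d)))]
          simp only [Finset.prod_mul_distrib]
          ring
      _ = _ := by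
          rw [sum_prod_eq_pow fun x y => ∏ i,
            (μ (x i) * μ (y (σ i)) * B (x i) (y (σ i)) * B (x i) (y (τ i))),
            sum_pair_eq_sum_perm μ B hBsymm, sum_perm_eq_prod_trace, ← Finset.prod_pow]
          refine Finset.prod_congr rfl fun k _ => ?_
          rw [← pow_mul, ← pow_mul, mul_comm d]
  have hfact : (n.factorial : ℝ) ≠ 0 := by positivity
  calc _ = (1 / (n.factorial : ℝ)) ^ 2 * ∑ σ : Equiv.Perm (Fin n), ∑ τ : Equiv.Perm (Fin n),
        ∑ x, ∑ y, q₀ x y * ((pAlt σ x y / q₀ x y) * (pAlt τ x y / q₀ x y)) := by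
        have hexp : ∀ x y, q₀ x y * (L x y) ^ 2 = (1 / (n.factorial : ℝ)) ^ 2 *
            ∑ σ : Equiv.Perm (Fin n), ∑ τ : Equiv.Perm (Fin n),
              q₀ x y * ((pAlt σ x y / q₀ x y) * (pAlt τ x y / q₀ x y)) := by
          intro x y
          simp only [← Finset.mul_sum]
          rw [← Finset.sum_mul, hL]
          ring
        simp only [hexp, ← Finset.mul_sum]
        congr 1
        calc _ = ∑ x, ∑ σ : Equiv.Perm (Fin n), ∑ y, ∑ τ : Equiv.Perm (Fin n),
              q₀ x y * ((pAlt σ x y / q₀ x y) * (pAlt τ x y / q₀ x y)) :=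
              Finset.sum_congr rfl fun x _ => by simp only [Finset.mul_sum]; exact Finset.sum_comm
          _ = ∑ σ : Equiv.Perm (Fin n), ∑ x, ∑ τ : Equiv.Perm (Fin n), ∑ y,
              q₀ x y * ((pAlt σ x y / q₀ x y) * (pAlt τ x y / q₀ x y)) := by
              rw [Finset.sum_comm]
              exact Finset.sum_congr rfl fun σ _ => Finset.sum_congr rfl fun x _ =>
                Finset.sum_comm
          _ = _ := Finset.sum_congr rfl fun σ _ => Finset.sum_comm
    _ = (1 / (n.factorial : ℝ)) ^ 2 * ∑ σ : Equiv.Perm (Fin n), ∑ π : Equiv.Perm (Fin n),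
        ∏ k ∈ Finset.Icc 1 n, (Matrix.trace ((Matrix.diagonal μ * B) ^ (2 * k))) ^
          (d * orbitCount π k) := by
        congr 1
        refine Finset.sum_congr rfl fun σ _ => ?_
        simp only [hpair]
        exact Equiv.sum_comp (Equiv.mulLeft σ⁻¹) fun π => ∏ k ∈ Finset.Icc 1 n,
          (Matrix.trace ((Matrix.diagonal μ * B) ^ (2 * k))) ^ (d * orbitCount π k)
    _ = _ := by
        rw [Finset.sum_const, Finset.card_univ, Fintype.card_perm, Fintype.card_fin, nsmul_eq_mul]
        field_simp
end

section
/- Let λ : ℕ → ℝ with λ_0 = 1 and λ_i² < 1 for all i ≥ 1, and suppose S := ∑_{i≥1} λ_i²/(1 − λ_i²) converges; set T := ∑_{i≥0} λ_i² = 1 + ∑_{i≥1} λ_i². Then for every integer n ≥ 1 and every natural number d ≥ 2: ∑_{k=1}^{n} (1/k) · ( ( ∑_{i≥0} λ_i^{2k} )^d − 1 ) ≤ d·S + T^{d−2} · (d·S)². -/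
open scoped BigOperators

/-!
Write `a_i = l_{i+1}²` and `x_k = ∑_i a_i^k`, so that `∑_{i≥0} l_i^{2k} = 1 + x_k` and `T = 1 + x_1`.
A second-order binomial bound (`one_add_pow_le_second_order`) gives
`(1 + x_k)^d - 1 ≤ d x_k + d² T^{d-2} x_1 x_k`, using `x_k ≤ x_1`. The right side is linear in `x_k`,
so everything reduces to `∑_{k=1}^n x_k / k ≤ S` and `x_1 ≤ S`. The former follows by exchanging the sums
and comparing `∑_k a^k / k` with the geometric series `∑_{k≥1} a^k = a / (1 - a)`; the cruder
comparison makes the logarithm unnecessary.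
-/

/-- Second-order Bernoulli upper bound, with the Taylor constant `d(d-1)/2` relaxed to `d²`
(where `d = m + 2`), which lets it be proved by induction. -/
lemma one_add_pow_le_second_order (x : ℝ) (hx : 0 ≤ x) (m : ℕ) :
    (1 + x) ^ (m + 2) ≤ 1 + (m + 2) * x + (m + 2) ^ 2 * (1 + x) ^ m * x ^ 2 := by
  induction m with
  | zero => norm_num; nlinarith [sq_nonneg x]
  | succ m ih =>
    have hP : 1 ≤ (1 + x) ^ (m + 1) := one_le_pow₀ (by linarith)
    have hm : (0 : ℝ) ≤ m := Nat.cast_nonneg m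
    have h1 : (1 + x) ^ (m + 1 + 2) ≤
        (1 + (m + 2) * x + (m + 2) ^ 2 * (1 + x) ^ m * x ^ 2) * (1 + x) := by
      rw [show m + 1 + 2 = (m + 2) + 1 by ring, pow_succ]
      exact mul_le_mul_of_nonneg_right ih (by linarith)
    have h2 : ((m : ℝ) + 2) * x ^ 2 * 1 ≤ (2 * m + 5) * x ^ 2 * (1 + x) ^ (m + 1) := by
      gcongr
      · linarith
      · norm_num
    push_cast
    calc _ ≤ _ := h1
      _ = 1 + (m + 3) * x + (m + 2) * x ^ 2 * 1 + (m + 2) ^ 2 * (1 + x) ^ (m + 1) * x ^ 2 := by ring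
      _ ≤ 1 + (m + 3) * x + (2 * m + 5) * x ^ 2 * (1 + x) ^ (m + 1)
          + (m + 2) ^ 2 * (1 + x) ^ (m + 1) * x ^ 2 := by gcongr
      _ = _ := by ring

/-- Finite form of `-log (1 - a) ≤ a / (1 - a)`, by comparison with the geometric series. -/
lemma sum_pow_div_le (a : ℝ) (h0 : 0 ≤ a) (h1 : a < 1) (n : ℕ) :
    ∑ k ∈ Finset.Icc 1 n, (1 / (k : ℝ)) * a ^ k ≤ a / (1 - a) := by
  have hpos : 0 < 1 - a := by linarith
  calc ∑ k ∈ Finset.Icc 1 n, (1 / (k : ℝ)) * a ^ k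
      ≤ ∑ k ∈ Finset.Icc 1 n, a ^ k := by
        refine Finset.sum_le_sum fun k hk => ?_
        have hk1 : (1 : ℝ) ≤ k := by exact_mod_cast (Finset.mem_Icc.mp hk).1
        have : 1 / (k : ℝ) ≤ 1 := by
          rw [div_le_one (by linarith)]; exact hk1
        exact mul_le_of_le_one_left (pow_nonneg h0 k) this
    _ ≤ a / (1 - a) := by
        rw [le_div_iff₀ hpos]
        have key : (∑ k ∈ Finset.Icc 1 n, a ^ k) * (1 - a) = a - a ^ (n + 1) := by
          induction n with
          | zero => simp
          | succ n ih => rw [Finset.sum_Icc_succ_top (by omega), add_mul, ih]; ring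
        rw [key]
        linarith [pow_nonneg h0 (n + 1)]

/-- **Key estimate for the Poisson-approximation second-moment bound.**
Let `λ : ℕ → ℝ` with `λ 0 = 1`, `λ_i² < 1` for `i ≥ 1`, and suppose
`S = ∑_{i≥1} λ_i²/(1−λ_i²)` converges; set `T = ∑_{i≥0} λ_i²`.  Then for every
`n ≥ 1` and `d ≥ 2`,
`∑_{k=1}^n (1/k) ((∑_{i≥0} λ_i^{2k})^d − 1) ≤ d·S + T^{d−2}·(d·S)²`. -/
theorem sum_pow_d_bound
    (l : ℕ → ℝ) (hl0 : l 0 = 1) (hl : ∀ i, 1 ≤ i → (l i) ^ 2 < 1)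
    (S T : ℝ)
    (hSsummable : Summable fun i : ℕ => (l (i + 1)) ^ 2 / (1 - (l (i + 1)) ^ 2))
    (hS : S = ∑' i : ℕ, (l (i + 1)) ^ 2 / (1 - (l (i + 1)) ^ 2))
    (hT : T = ∑' i : ℕ, (l i) ^ 2)
    (n : ℕ) (hn : 1 ≤ n) (d : ℕ) (hd : 2 ≤ d) :
    ∑ k ∈ Finset.Icc 1 n, (1 / (k : ℝ)) * ((∑' i : ℕ, (l i) ^ (2 * k)) ^ d - 1) ≤
      d * S + T ^ (d - 2) * (d * S) ^ 2 := by
  set a : ℕ → ℝ := fun i => (l (i + 1)) ^ 2 with ha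
  have a0 : ∀ i, 0 ≤ a i := fun i => sq_nonneg _
  have a1 : ∀ i, a i < 1 := fun i => hl (i + 1) (by omega)
  have hle : ∀ i, a i ≤ a i / (1 - a i) := fun i => by
    rw [le_div_iff₀ (by linarith [a1 i])]
    nlinarith [a0 i]
  have hSs : Summable fun i => a i / (1 - a i) := hSsummable
  have hS : S = ∑' i, a i / (1 - a i) := hS
  have ha_sum : Summable a := Summable.of_nonneg_of_le a0 hle hSs
  have hpow_le : ∀ k, 1 ≤ k → ∀ i, a i ^ k ≤ a i := fun k hk i =>
    pow_le_of_le_one (a0 i) (a1 i).le (by omega)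
  have hpow_sum : ∀ k, 1 ≤ k → Summable fun i => a i ^ k := fun k hk =>
    Summable.of_nonneg_of_le (fun i => pow_nonneg (a0 i) k) (hpow_le k hk) ha_sum
  set x : ℕ → ℝ := fun k => ∑' i, a i ^ k with hx
  have x0 : ∀ k, 0 ≤ x k := fun k => tsum_nonneg fun i => pow_nonneg (a0 i) k
  have hxle : ∀ k, 1 ≤ k → x k ≤ ∑' i, a i := fun k hk =>
    (hpow_sum k hk).tsum_le_tsum (hpow_le k hk) ha_sum
  have hsplit : ∀ k, 1 ≤ k → ∑' i, (l i) ^ (2 * k) = 1 + x k := fun k hk => by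
    have hs : Summable fun i => (l i) ^ (2 * k) := by
      rw [← summable_nat_add_iff 1]
      simpa only [ha, ← pow_mul] using hpow_sum k hk
    rw [hs.tsum_eq_zero_add, hl0, one_pow]
    simp only [hx, ha, ← pow_mul]
  have hTx : T = 1 + ∑' i, a i := by
    have := hsplit 1 le_rfl
    simpa only [mul_one, hx, pow_one, ← hT] using this
  have hA0 : 0 ≤ ∑' i, a i := tsum_nonneg a0
  have hAS : ∑' i, a i ≤ S := hS ▸ ha_sum.tsum_le_tsum hle hSs
  have hweighted : ∑ k ∈ Finset.Icc 1 n, (1 / (k : ℝ)) * x k ≤ S := by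
    have hs : ∀ k ∈ Finset.Icc 1 n, Summable fun i => (1 / (k : ℝ)) * a i ^ k := fun k hk =>
      (hpow_sum k (Finset.mem_Icc.mp hk).1).mul_left _
    simp only [hx, ← tsum_mul_left]
    rw [← Summable.tsum_finsetSum hs, hS]
    exact (summable_sum hs).tsum_le_tsum (fun i => sum_pow_div_le (a i) (a0 i) (a1 i) n) hSs
  obtain ⟨m, rfl⟩ : ∃ m, d = m + 2 := ⟨d - 2, by omega⟩
  have hT0 : 0 ≤ T := by linarith
  have hterm : ∀ k ∈ Finset.Icc 1 n,
      (1 / (k : ℝ)) * ((∑' i : ℕ, (l i) ^ (2 * k)) ^ (m + 2) - 1) ≤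
        ((m + 2) + (m + 2) ^ 2 * T ^ m * S) * ((1 / (k : ℝ)) * x k) := fun k hk => by
    have hk1 := (Finset.mem_Icc.mp hk).1
    have hxA := hxle k hk1
    have hxk := x0 k
    have h := one_add_pow_le_second_order (x k) hxk m
    have hq : (m + 2 : ℝ) ^ 2 * (1 + x k) ^ m * x k ^ 2 ≤ (m + 2) ^ 2 * T ^ m * (S * x k) := by
      rw [pow_two (x k)]
      gcongr
      · linarith
      · linarith
    rw [hsplit k hk1]
    calc _ ≤ (1 / (k : ℝ)) * ((m + 2) * x k + (m + 2) ^ 2 * T ^ m * (S * x k)) :=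
          mul_le_mul_of_nonneg_left (by linarith) (by positivity)
      _ = _ := by ring
  have hS0 : 0 ≤ S := hA0.trans hAS
  calc _ ≤ ∑ k ∈ Finset.Icc 1 n,
        ((m + 2) + (m + 2) ^ 2 * T ^ m * S) * ((1 / (k : ℝ)) * x k) := Finset.sum_le_sum hterm
    _ = ((m + 2) + (m + 2) ^ 2 * T ^ m * S) * ∑ k ∈ Finset.Icc 1 n, (1 / (k : ℝ)) * x k := by
        rw [Finset.mul_sum]
    _ ≤ ((m + 2) + (m + 2) ^ 2 * T ^ m * S) * S :=
        mul_le_mul_of_nonneg_left hweighted (by positivity)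
    _ = _ := by
        rw [Nat.add_sub_cancel]
        push_cast
        ring
end
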